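/- Let D ⊆ ℝ² be bounded open with Cheeger constant λ and maximal Cheeger set E₀ (so Per(E₀)/|E₀| = λ). Let u ∈ BV(ℝ²) be nonnegative, supported in D, with TV(u) = λ·∫ u. Then for almost every t > 0, the level set {u > t} is a Cheeger set of D, i.e. Per({u > t}) = λ·|{u > t}| whenever |{u > t}| > 0. -/

import Mathlib

open MeasureTheory Real Set Filter

noncomputable section

abbrev E2 := EuclideanSpace ℝ (Fin 2)

/-- Divergence of a vector field on the plane. -/
def div2 (z : E2 → E2) (x : E2) : ℝ := ∑ i : Fin 2, fderiv ℝ z x (EuclideanSpace.single i 1) i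

/-- The dual set defining the total variation. -/
def tvSet (u : E2 → ℝ) : Set ℝ :=
  {y | ∃ z : E2 → E2, ContDiff ℝ (⊤ : ℕ∞) z ∧ HasCompactSupport z ∧ (∀ x, ‖z x‖ ≤ 1) ∧
        y = ∫ x, u x * div2 z x}

/-- Total variation of a function on ℝ². -/
def TV (u : E2 → ℝ) : ℝ := sSup (tvSet u)

/-- `u` has bounded variation. -/
def HasBV (u : E2 → ℝ) : Prop := BddAbove (tvSet u)

/-- Perimeter of a set. -/
def Per (A : Set E2) : ℝ := TV (A.indicator 1)

/-- `A` has finite perimeter. -/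
def FinPer (A : Set E2) : Prop := HasBV (A.indicator 1)

/-- Lebesgue measure as a real number. -/
def volR (A : Set E2) : ℝ := (volume A).toReal

/-- Cheeger constant of a domain `D`. -/
def cheegerConst (D : Set E2) : ℝ :=
  sInf {q : ℝ | ∃ A : Set E2, MeasurableSet A ∧ FinPer A ∧ A ⊆ D ∧ 0 < volR A ∧ q = Per A / volR A}

/-- `A` is a Cheeger set of `D`. -/
def IsCheegerSet (D A : Set E2) : Prop :=
  MeasurableSet A ∧ FinPer A ∧ A ⊆ D ∧ 0 < volR A ∧ Per A / volR A = cheegerConst D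

/-- Admissible test fields. -/
def Adm (z : E2 → E2) : Prop :=
  ContDiff ℝ (⊤ : ℕ∞) z ∧ HasCompactSupport z ∧ ∀ x, ‖z x‖ ≤ 1

lemma div2_continuous {z : E2 → E2} (hz : ContDiff ℝ (⊤ : ℕ∞) z) : Continuous (div2 z) := by
  have h : Continuous (fderiv ℝ z) := hz.continuous_fderiv (by simp)
  unfold div2
  fun_prop

lemma div2_compact {z : E2 → E2} (hz : HasCompactSupport z) : HasCompactSupport (div2 z) := by
  have h := hz.fderiv ℝ
  exact h.comp_left (g := fun L : E2 →L[ℝ] E2 => ∑ i : Fin 2, L (EuclideanSpace.single i 1) i)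
    (by simp)

lemma div2_bound {z : E2 → E2} (hz : Adm z) : ∃ C, 0 ≤ C ∧ ∀ x, |div2 z x| ≤ C := by
  obtain ⟨C, hC⟩ := (div2_continuous hz.1).bounded_above_of_compact_support (div2_compact hz.2.1)
  exact ⟨C, (norm_nonneg _).trans (hC 0), hC⟩

lemma integrable_mul_div2 {u : E2 → ℝ} (hu : Integrable u) {z : E2 → E2} (hz : Adm z) :
    Integrable (fun x => u x * div2 z x) := by
  obtain ⟨C, hC0, hC⟩ := div2_bound hz
  exact hu.mul_bdd (c := C) (div2_continuous hz.1).aestronglyMeasurable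
    (Eventually.of_forall hC)

lemma le_TV {u : E2 → ℝ} (hu : HasBV u) {z : E2 → E2} (hz : Adm z) :
    ∫ x, u x * div2 z x ≤ TV u :=
  le_csSup hu ⟨z, hz.1, hz.2.1, hz.2.2, rfl⟩

lemma adm_zero : Adm 0 :=
  ⟨contDiff_const, HasCompactSupport.zero, by simp⟩

lemma TV_le {u : E2 → ℝ} {c : ℝ} (h : ∀ z, Adm z → ∫ x, u x * div2 z x ≤ c) : TV u ≤ c := by
  refine csSup_le ⟨_, 0, adm_zero.1, adm_zero.2.1, adm_zero.2.2, rfl⟩ ?_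
  rintro y ⟨z, h1, h2, h3, rfl⟩
  exact h z ⟨h1, h2, h3⟩

lemma hasBV_of {u : E2 → ℝ} {c : ℝ} (h : ∀ z, Adm z → ∫ x, u x * div2 z x ≤ c) : HasBV u := by
  refine ⟨c, ?_⟩
  rintro y ⟨z, h1, h2, h3, rfl⟩
  exact h z ⟨h1, h2, h3⟩

lemma div2_zero (x : E2) : div2 0 x = 0 := by
  simp [div2]

lemma TV_nonneg {u : E2 → ℝ} (hu : HasBV u) : 0 ≤ TV u := by
  have := le_TV hu adm_zero
  simpa [div2_zero] using this

lemma fderiv_coord {z : E2 → E2} (hz : Differentiable ℝ z) (i : Fin 2) (x v : E2) :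
    fderiv ℝ (fun y => z y i) x v = fderiv ℝ z x v i := by
  have h := ((EuclideanSpace.proj i : E2 →L[ℝ] ℝ).hasFDerivAt
    (x := z x)).comp x (hz x).hasFDerivAt
  have h2 := h.fderiv
  have h3 : (fun y => z y i) =
    (⇑(EuclideanSpace.proj i : E2 →L[ℝ] ℝ)) ∘ z := rfl
  rw [h3, h2]
  rfl

lemma ibp {f : E2 → ℝ} (hf : ContDiff ℝ (⊤ : ℕ∞) f) {z : E2 → E2}
    (hz : ContDiff ℝ (⊤ : ℕ∞) z) (hc : HasCompactSupport z) :
    ∫ x, f x * div2 z x =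
      - ∫ x, ∑ i : Fin 2, fderiv ℝ f x (EuclideanSpace.single i 1) * z x i := by
  have hzd : Differentiable ℝ z := hz.differentiable (by simp)
  have hfd : Differentiable ℝ f := hf.differentiable (by simp)
  have hfc : Continuous (fderiv ℝ f) := hf.continuous_fderiv (by simp)
  have hzc : Continuous (fderiv ℝ z) := hz.continuous_fderiv (by simp)
  have hz0 : Continuous z := hz.continuous
  have hf0 : Continuous f := hf.continuous
  have hci : ∀ i : Fin 2, HasCompactSupport (fun x => z x i) := fun i =>
    hc.comp_left (g := fun y : E2 => y i) (by simp)
  have hci' : ∀ i : Fin 2, HasCompactSupport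
      (fun x => fderiv ℝ z x (EuclideanSpace.single i 1) i) := fun i =>
    (hc.fderiv ℝ).comp_left (g := fun L : E2 →L[ℝ] E2 => L (EuclideanSpace.single i 1) i)
      (by simp)
  have I1 : ∀ i : Fin 2, Integrable
      (fun x => f x * fderiv ℝ z x (EuclideanSpace.single i 1) i) := fun i =>
    Continuous.integrable_of_hasCompactSupport (by fun_prop) (hci' i).mul_left
  have I2 : ∀ i : Fin 2, Integrable
      (fun x => fderiv ℝ f x (EuclideanSpace.single i 1) * z x i) := fun i =>
    Continuous.integrable_of_hasCompactSupport (by fun_prop) (hci i).mul_left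
  have I3 : ∀ i : Fin 2, Integrable (fun x => f x * z x i) := fun i =>
    Continuous.integrable_of_hasCompactSupport (by fun_prop) (hci i).mul_left
  unfold div2
  simp_rw [Finset.mul_sum]
  rw [integral_finsetSum _ (fun i _ => I1 i), integral_finsetSum _ (fun i _ => I2 i),
    ← Finset.sum_neg_distrib]
  refine Finset.sum_congr rfl fun i _ => ?_
  simp_rw [← fderiv_coord hzd i]
  refine integral_mul_fderiv_eq_neg_fderiv_mul_of_integrable (I2 i) ?_ (I3 i) ?_ ?_
  · simp_rw [fderiv_coord hzd i]; exact I1 i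
  · intro x _; exact hfd x
  · intro x _
    exact ((EuclideanSpace.proj i : E2 →L[ℝ] ℝ).differentiableAt).comp x
      (hzd x)

lemma adm_comb {d : E2 → ℝ} (hd : ContDiff ℝ (⊤ : ℕ∞) d) (h0 : ∀ s, 0 ≤ d s) (h1 : ∀ s, d s ≤ 1)
    {z₁ z₂ : E2 → E2} (hz₁ : Adm z₁) (hz₂ : Adm z₂) :
    Adm (fun x => d x • z₁ x + (1 - d x) • z₂ x) := by
  refine ⟨(hd.smul hz₁.1).add ((contDiff_const.sub hd).smul hz₂.1), ?_, fun x => ?_⟩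
  · have a1 : HasCompactSupport (fun x => d x • z₁ x) := hz₁.2.1.smul_left (f := d)
    have a2 : HasCompactSupport (fun x => (1 - d x) • z₂ x) :=
      hz₂.2.1.smul_left (f := fun x => 1 - d x)
    exact a1.add a2
  have ha := h0 x
  have hb := h1 x
  calc ‖d x • z₁ x + (1 - d x) • z₂ x‖
      ≤ ‖d x • z₁ x‖ + ‖(1 - d x) • z₂ x‖ := norm_add_le _ _
    _ = d x * ‖z₁ x‖ + (1 - d x) * ‖z₂ x‖ := by
      rw [norm_smul, norm_smul, Real.norm_of_nonneg ha, Real.norm_of_nonneg (by linarith)]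
    _ ≤ 1 := by
      have := hz₁.2.2 x
      have := hz₂.2.2 x
      nlinarith

lemma fderiv_c1 {v : E2 → ℝ} (hvd : Differentiable ℝ v) {φ : ℝ → ℝ} (hφd : Differentiable ℝ φ)
    (x e : E2) : fderiv ℝ (fun x => φ (v x)) x e = deriv φ (v x) * fderiv ℝ v x e := by
  have h := ((hφd (v x)).hasDerivAt.comp_hasFDerivAt x (hvd x).hasFDerivAt).fderiv
  have h3 : (fun x => φ (v x)) = φ ∘ v := rfl
  rw [h3, h]; simp

lemma fderiv_c2 {v : E2 → ℝ} (hvd : Differentiable ℝ v) {φ : ℝ → ℝ} (hφd : Differentiable ℝ φ)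
    (x e : E2) : fderiv ℝ (fun x => v x - φ (v x)) x e
      = (1 - deriv φ (v x)) * fderiv ℝ v x e := by
  have h := fderiv_fun_sub (hvd x) (g := fun x => φ (v x)) ((hφd (v x)).comp x (hvd x))
  rw [h, sub_apply, fderiv_c1 hvd hφd]
  ring

/-- The splitting identity for smooth functions. -/
lemma smooth_split {v : E2 → ℝ} (hv : ContDiff ℝ (⊤ : ℕ∞) v)
    {φ : ℝ → ℝ} (hφ : ContDiff ℝ (⊤ : ℕ∞) φ) (h0 : ∀ s, 0 ≤ deriv φ s) (h1 : ∀ s, deriv φ s ≤ 1)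
    {z₁ z₂ : E2 → E2} (hz₁ : Adm z₁) (hz₂ : Adm z₂) :
    ∃ w, Adm w ∧ (∫ x, φ (v x) * div2 z₁ x) + (∫ x, (v x - φ (v x)) * div2 z₂ x)
      = ∫ x, v x * div2 w x := by
  have hd : ContDiff ℝ (⊤ : ℕ∞) (deriv φ) := ((contDiff_infty_iff_deriv (f := φ)).1 hφ).2
  have hvd : Differentiable ℝ v := hv.differentiable (by simp)
  have hφd : Differentiable ℝ φ := hφ.differentiable (by simp)
  have hdv : ContDiff ℝ (⊤ : ℕ∞) (fun x => deriv φ (v x)) := hd.comp hv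
  have hw := adm_comb hdv (fun x => h0 (v x)) (fun x => h1 (v x)) hz₁ hz₂
  refine ⟨_, hw, ?_⟩
  have hfc : Continuous (fderiv ℝ v) := hv.continuous_fderiv (by simp)
  have c1 : Continuous z₁ := hz₁.1.continuous
  have c2 : Continuous z₂ := hz₂.1.continuous
  have c3 : Continuous (fun x => deriv φ (v x)) := hdv.continuous
  have e1 := ibp (f := fun x => φ (v x)) (hφ.comp hv) hz₁.1 hz₁.2.1
  have e2 := ibp (f := fun x => v x - φ (v x)) (hv.sub (hφ.comp hv)) hz₂.1 hz₂.2.1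
  simp only [fderiv_c1 hvd hφd] at e1
  simp only [fderiv_c2 hvd hφd] at e2
  rw [e1, e2, ibp hv hw.1 hw.2.1, ← neg_add, ← integral_add]
  · congr 1
    refine integral_congr_ae (Eventually.of_forall fun x => ?_)
    simp only [← Finset.sum_add_distrib]
    refine Finset.sum_congr rfl fun i _ => ?_
    simp only [PiLp.add_apply, PiLp.smul_apply, smul_eq_mul]
    ring
  · refine integrable_finsetSum _ fun i _ => ?_
    refine Continuous.integrable_of_hasCompactSupport (by fun_prop) ?_
    have := hz₁.2.1.comp_left (g := fun y : E2 => y i) (by simp)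
    exact this.mul_left
  · refine integrable_finsetSum _ fun i _ => ?_
    refine Continuous.integrable_of_hasCompactSupport (by fun_prop) ?_
    have := hz₂.2.1.comp_left (g := fun y : E2 => y i) (by simp)
    exact this.mul_left

lemma adm_shift {z : E2 → E2} (hz : Adm z) (t : E2) : Adm (fun x => z (x + t)) := by
  refine ⟨hz.1.comp (contDiff_id.add contDiff_const), ?_, fun x => hz.2.2 _⟩
  exact hz.2.1.comp_homeomorph (Homeomorph.addRight t)

lemma div2_shift (z : E2 → E2) (t x : E2) : div2 (fun x => z (x + t)) x = div2 z (x + t) := by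
  simp only [div2, fderiv_comp_add_right]

open scoped Convolution Topology in
lemma conv_tv {u : E2 → ℝ} (hint : Integrable u) (hbv : HasBV u) {ρ : E2 → ℝ}
    (hρ : Integrable ρ) (hρ0 : ∀ x, 0 ≤ ρ x) (hρ1 : ∫ x, ρ x = 1) {z : E2 → E2} (hz : Adm z) :
    ∫ x, (ρ ⋆[ContinuousLinearMap.lsmul ℝ ℝ, volume] u) x * div2 z x ≤ TV u := by
  obtain ⟨C, hC0, hC⟩ := div2_bound hz
  have I0 := hρ.convolution_integrand (ContinuousLinearMap.lsmul ℝ ℝ) hint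
  have I1 : Integrable (fun p : E2 × E2 => ρ p.2 * (u (p.1 - p.2) * div2 z p.1))
      (volume.prod volume) := by
    have := I0.mul_bdd (c := C) (g := fun p : E2 × E2 => div2 z p.1)
      ((div2_continuous hz.1).comp continuous_fst).aestronglyMeasurable
      (Eventually.of_forall fun p => hC p.1)
    refine this.congr (Eventually.of_forall fun p => ?_)
    simp [mul_assoc]
  have key : ∀ t, ∫ x, ρ t * (u (x - t) * div2 z x)
      = ρ t * ∫ y, u y * div2 (fun x => z (x + t)) y := by
    intro t
    rw [integral_const_mul]
    congr 1
    rw [← integral_add_right_eq_self (fun x => u (x - t) * div2 z x) t]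
    simp [div2_shift]
  calc ∫ x, (ρ ⋆[ContinuousLinearMap.lsmul ℝ ℝ, volume] u) x * div2 z x
      = ∫ x, ∫ t, ρ t * (u (x - t) * div2 z x) := by
        refine integral_congr_ae (Eventually.of_forall fun x => ?_)
        simp only [convolution_def, ContinuousLinearMap.lsmul_apply, smul_eq_mul]
        rw [← integral_mul_const]
        simp [mul_assoc]
    _ = ∫ t, ∫ x, ρ t * (u (x - t) * div2 z x) := integral_integral_swap I1
    _ = ∫ t, ρ t * ∫ y, u y * div2 (fun x => z (x + t)) y := by simp_rw [key]
    _ ≤ ∫ t, ρ t * TV u := by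
        refine integral_mono ?_ (hρ.mul_const _) fun t => ?_
        · have := I1.integral_prod_right
          simpa only [key] using this
        · exact mul_le_mul_of_nonneg_left (le_TV hbv (adm_shift hz t)) (hρ0 t)
    _ = TV u := by rw [integral_mul_const, hρ1, one_mul]

open scoped Topology in
/-- The Scheffe lemma. -/
lemma scheffe {u : E2 → ℝ} {v : ℕ → E2 → ℝ} (hint : Integrable u) (hpos : ∀ x, 0 ≤ u x)
    (hv : ∀ n, Integrable (v n)) (hv0 : ∀ n x, 0 ≤ v n x) (he : ∀ n, ∫ x, v n x = ∫ x, u x)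
    (hl : ∀ᵐ x, Tendsto (fun n => v n x) atTop (𝓝 (u x))) :
    Tendsto (fun n => ∫ x, |v n x - u x|) atTop (𝓝 0) := by
  have h1 : Tendsto (fun n => ∫ x, min (v n x) (u x)) atTop (𝓝 (∫ x, u x)) := by
    refine tendsto_integral_of_dominated_convergence u
      (fun n => ((hv n).inf hint).aestronglyMeasurable) hint
      (fun n => Eventually.of_forall fun x => ?_) ?_
    · rw [Real.norm_of_nonneg (le_min (hv0 n x) (hpos x))]
      exact min_le_right _ _
    · filter_upwards [hl] with x hx
      simpa using hx.min (tendsto_const_nhds (x := u x))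
  have h2 : ∀ n, ∫ x, |v n x - u x| = 2 * (∫ x, u x) - 2 * ∫ x, min (v n x) (u x) := by
    intro n
    have I : Integrable (fun x => min (v n x) (u x)) := (hv n).inf hint
    have : ∀ x, |v n x - u x| = (v n x + u x) - 2 * min (v n x) (u x) := by
      intro x
      rcases le_total (v n x) (u x) with h | h
      · rw [min_eq_left h, abs_of_nonpos (by linarith)]; ring
      · rw [min_eq_right h, abs_of_nonneg (by linarith)]; ring
    simp_rw [this]
    have hs : Integrable (fun x => v n x + u x) := (hv n).add hint
    rw [integral_sub hs (I.const_mul 2), integral_add (hv n) hint, he n,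
      integral_const_mul]
    ring
  simp_rw [h2]
  have := (tendsto_const_nhds (x := 2 * ∫ x, u x)).sub (h1.const_mul 2)
  simpa using this

open scoped Convolution Topology in
lemma mollify {u : E2 → ℝ} (hint : Integrable u) (hpos : ∀ x, 0 ≤ u x) (hbv : HasBV u) :
    ∃ v : ℕ → E2 → ℝ, (∀ n, ContDiff ℝ (⊤ : ℕ∞) (v n)) ∧ (∀ n, Integrable (v n)) ∧
      (∀ n z, Adm z → ∫ x, v n x * div2 z x ≤ TV u) ∧
      Tendsto (fun n => ∫ x, |v n x - u x|) atTop (𝓝 0) := by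
  let φ : ℕ → ContDiffBump (0 : E2) := fun n =>
    ⟨1 / ((n : ℝ) + 1), 2 * (1 / ((n : ℝ) + 1)), by positivity, by
      have : 0 < 1 / ((n : ℝ) + 1) := by positivity
      linarith⟩
  let ρ : ℕ → E2 → ℝ := fun n => (φ n).normed volume
  have hρi : ∀ n, Integrable (ρ n) := fun n => (φ n).integrable_normed
  have hρ0 : ∀ n x, 0 ≤ ρ n x := fun n => (φ n).nonneg_normed
  have hρ1 : ∀ n, ∫ x, ρ n x = 1 := fun n => (φ n).integral_normed
  refine ⟨fun n => ρ n ⋆[ContinuousLinearMap.lsmul ℝ ℝ, volume] u, ?_, ?_, ?_, ?_⟩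
  · intro n
    exact (φ n).hasCompactSupport_normed.contDiff_convolution_left _ (φ n).contDiff_normed
      hint.locallyIntegrable
  · intro n
    exact (hρi n).integrable_convolution _ hint
  · intro n z hz
    exact conv_tv hint hbv (hρi n) (hρ0 n) (hρ1 n) hz
  · refine scheffe hint hpos (fun n => (hρi n).integrable_convolution _ hint) ?_ ?_ ?_
    · intro n x
      refine integral_nonneg fun t => ?_
      exact mul_nonneg (hρ0 n _) (hpos _)
    · intro n
      rw [integral_convolution _ (hρi n) hint, hρ1 n]
      simp
    · refine ContDiffBump.ae_convolution_tendsto_right_of_locallyIntegrable (φ := φ) (K := 2)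
        ?_ (Eventually.of_forall fun n => le_rfl) hint.locallyIntegrable
      have := (tendsto_one_div_add_atTop_nhds_zero_nat (𝕜 := ℝ)).const_mul 2
      simpa [φ] using this

open scoped Topology in
lemma tendsto_lip {u : E2 → ℝ} {v : ℕ → E2 → ℝ} (hint : Integrable u) (hv : ∀ n, Integrable (v n))
    (hl : Tendsto (fun n => ∫ x, |v n x - u x|) atTop (𝓝 0))
    {F : ℝ → ℝ} (hF : ∀ s t, |F s - F t| ≤ |s - t|) (hF0 : F 0 = 0) {z : E2 → E2} (hz : Adm z) :
    Tendsto (fun n => ∫ x, F (v n x) * div2 z x) atTop (𝓝 (∫ x, F (u x) * div2 z x)) := by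
  have hFc : Continuous F := by
    have : LipschitzWith 1 F := LipschitzWith.of_dist_le_mul fun s t => by
      simpa [Real.dist_eq] using hF s t
    exact this.continuous
  have hI : ∀ {w : E2 → ℝ}, Integrable w → Integrable (fun x => F (w x)) := by
    intro w hw
    refine hw.mono (hFc.comp_aestronglyMeasurable hw.aestronglyMeasurable)
      (Eventually.of_forall fun x => ?_)
    have := hF (w x) 0
    simpa [hF0] using this
  obtain ⟨C, hC0, hC⟩ := div2_bound hz
  rw [tendsto_iff_dist_tendsto_zero]
  refine squeeze_zero (fun n => dist_nonneg) (g := fun n => C * ∫ x, |v n x - u x|) (fun n => ?_)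
    (by simpa using hl.const_mul C)
  rw [Real.dist_eq, ← integral_sub (integrable_mul_div2 (hI (hv n)) hz)
    (integrable_mul_div2 (hI hint) hz), ← integral_const_mul]
  refine (abs_integral_le_integral_abs).trans (integral_mono ?_ ?_ fun x => ?_)
  · exact ((integrable_mul_div2 (hI (hv n)) hz).sub (integrable_mul_div2 (hI hint) hz)).abs
  · exact (((hv n).sub hint).abs).const_mul C
  · simp only
    rw [← sub_mul, abs_mul, mul_comm]
    exact mul_le_mul (hC x) (hF _ _) (abs_nonneg _) hC0

lemma split_smooth_phi {u : E2 → ℝ} (hint : Integrable u) (hpos : ∀ x, 0 ≤ u x) (hbv : HasBV u)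
    {φ : ℝ → ℝ} (hφ : ContDiff ℝ (⊤ : ℕ∞) φ) (h0 : ∀ s, 0 ≤ deriv φ s) (h1 : ∀ s, deriv φ s ≤ 1)
    (hφ0 : φ 0 = 0) {z₁ z₂ : E2 → E2} (hz₁ : Adm z₁) (hz₂ : Adm z₂) :
    (∫ x, φ (u x) * div2 z₁ x) + (∫ x, (u x - φ (u x)) * div2 z₂ x) ≤ TV u := by
  obtain ⟨v, hvs, hvi, hvt, hvl⟩ := mollify hint hpos hbv
  have hφd : Differentiable ℝ φ := hφ.differentiable (by simp)
  have hm : Monotone φ := monotone_of_deriv_nonneg hφd h0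
  have hm2 : Monotone (fun s => s - φ s) := by
    refine monotone_of_deriv_nonneg (differentiable_id.sub hφd) fun s => ?_
    have : deriv (fun s => s - φ s) s = 1 - deriv φ s := by
      have := ((hasDerivAt_id s).sub (hφd s).hasDerivAt).deriv
      exact this
    rw [this]
    linarith [h1 s]
  have L1 : ∀ s t, |φ s - φ t| ≤ |s - t| ∧ |(s - φ s) - (t - φ t)| ≤ |s - t| := by
    intro s t
    rcases le_total s t with h | h
    · have a := hm h
      have b := hm2 h
      simp only at b
      rw [abs_of_nonpos (by linarith), abs_of_nonpos (by linarith), abs_of_nonpos (by linarith)]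
      constructor <;> linarith
    · have a := hm h
      have b := hm2 h
      simp only at b
      rw [abs_of_nonneg (by linarith), abs_of_nonneg (by linarith), abs_of_nonneg (by linarith)]
      constructor <;> linarith
  have t1 := tendsto_lip hint hvi hvl (F := φ) (fun s t => (L1 s t).1) hφ0 hz₁
  have t2 := tendsto_lip hint hvi hvl (F := fun s => s - φ s) (fun s t => (L1 s t).2)
    (by simp [hφ0]) hz₂
  refine le_of_tendsto' (t1.add t2) fun n => ?_
  obtain ⟨w, hw, he⟩ := smooth_split (hvs n) hφ h0 h1 hz₁ hz₂
  rw [he]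
  exact hvt n w hw

/-- Smooth approximation of the positive part of `s - a`. -/
def sp (a δ s : ℝ) : ℝ := (s + √((s - a) ^ 2 + δ ^ 2) - √(a ^ 2 + δ ^ 2)) / 2

lemma sp_hasDeriv (a : ℝ) {δ : ℝ} (hδ : 0 < δ) (s : ℝ) :
    HasDerivAt (sp a δ) ((1 + (s - a) / √((s - a) ^ 2 + δ ^ 2)) / 2) s := by
  have h1 : HasDerivAt (fun s => (s - a) ^ 2 + δ ^ 2) (2 * (s - a)) s := by
    have := (((hasDerivAt_id s).sub_const a).pow 2).add_const (δ ^ 2)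
    simpa using this
  have h2 := h1.sqrt (by positivity)
  have h3 := (((hasDerivAt_id s).add h2).sub_const (√(a ^ 2 + δ ^ 2))).div_const 2
  refine h3.congr_deriv ?_
  have : 0 < √((s - a) ^ 2 + δ ^ 2) := by positivity
  field_simp

lemma sp_deriv_bd (a : ℝ) {δ : ℝ} (hδ : 0 < δ) (s : ℝ) :
    0 ≤ deriv (sp a δ) s ∧ deriv (sp a δ) s ≤ 1 := by
  rw [(sp_hasDeriv a hδ s).deriv]
  have hp : 0 < √((s - a) ^ 2 + δ ^ 2) := by positivity
  have hle : |s - a| ≤ √((s - a) ^ 2 + δ ^ 2) := by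
    apply Real.abs_le_sqrt
    nlinarith [sq_nonneg δ]
  have h : |(s - a) / √((s - a) ^ 2 + δ ^ 2)| ≤ 1 := by
    rw [abs_div, abs_of_pos hp]
    exact (div_le_one hp).2 hle
  have := abs_le.1 h
  constructor <;> linarith

lemma sp_contDiff (a : ℝ) {δ : ℝ} (hδ : 0 < δ) : ContDiff ℝ (⊤ : ℕ∞) (sp a δ) := by
  unfold sp
  have h1 : ContDiff ℝ (⊤ : ℕ∞) (fun s : ℝ => (s - a) ^ 2 + δ ^ 2) := by fun_prop
  have h2 := h1.sqrt (fun s => by positivity)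
  exact ((contDiff_id.add h2).sub contDiff_const).div_const 2

lemma sp_zero (a δ : ℝ) : sp a δ 0 = 0 := by simp [sp]

lemma sp_bd (a : ℝ) {δ : ℝ} (hδ : 0 < δ) {s : ℝ} (hs : 0 ≤ s) : 0 ≤ sp a δ s ∧ sp a δ s ≤ s := by
  have hd : Differentiable ℝ (sp a δ) := fun s => (sp_hasDeriv a hδ s).differentiableAt
  have hm : Monotone (sp a δ) := monotone_of_deriv_nonneg hd fun s => (sp_deriv_bd a hδ s).1
  have hm2 : Monotone (fun s => s - sp a δ s) := by
    refine monotone_of_deriv_nonneg (differentiable_id.sub hd) fun s => ?_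
    have : deriv (fun s => s - sp a δ s) s = 1 - deriv (sp a δ) s :=
      ((hasDerivAt_id s).sub (hd s).hasDerivAt).deriv
    rw [this]
    linarith [(sp_deriv_bd a hδ s).2]
  have a1 := hm hs
  have a2 := hm2 hs
  simp only [sp_zero] at a1 a2
  constructor <;> linarith

open scoped Topology in
lemma sp_tendsto {a : ℝ} (ha : 0 ≤ a) (s : ℝ) :
    Tendsto (fun n : ℕ => sp a (1 / ((n : ℝ) + 1)) s) atTop (𝓝 (max (s - a) 0)) := by
  have hc : Continuous (fun δ => sp a δ s) := by unfold sp; fun_prop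
  have h := (hc.tendsto 0).comp (tendsto_one_div_add_atTop_nhds_zero_nat (𝕜 := ℝ))
  have h0 : sp a 0 s = max (s - a) 0 := by
    simp only [sp, ne_eq, OfNat.ofNat_ne_zero, not_false_eq_true, zero_pow, add_zero,
      Real.sqrt_sq_eq_abs, abs_of_nonneg ha]
    rcases le_total (s - a) 0 with h | h
    · rw [max_eq_right h, abs_of_nonpos h]; ring
    · rw [max_eq_left h, abs_of_nonneg h]; ring
  rw [h0] at h
  exact h

open scoped Topology in
lemma split_lemma {u : E2 → ℝ} (hint : Integrable u) (hpos : ∀ x, 0 ≤ u x) (hbv : HasBV u)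
    {a : ℝ} (ha : 0 ≤ a) {z₁ z₂ : E2 → E2} (hz₁ : Adm z₁) (hz₂ : Adm z₂) :
    (∫ x, max (u x - a) 0 * div2 z₁ x) + (∫ x, min (u x) a * div2 z₂ x) ≤ TV u := by
  have hp : ∀ n : ℕ, 0 < 1 / ((n : ℝ) + 1) := fun n => by positivity
  have hmin : ∀ s : ℝ, min s a = s - max (s - a) 0 := by
    intro s
    rcases le_total s a with h | h
    · rw [min_eq_left h, max_eq_right (by linarith)]; ring
    · rw [min_eq_right h, max_eq_left (by linarith)]; ring
  have hm : ∀ n : ℕ, AEStronglyMeasurable (fun x => sp a (1 / ((n : ℝ) + 1)) (u x)) := fun n =>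
    (sp_contDiff a (hp n)).continuous.comp_aestronglyMeasurable hint.aestronglyMeasurable
  have t1 : Tendsto (fun n : ℕ => ∫ x, sp a (1 / ((n : ℝ) + 1)) (u x) * div2 z₁ x) atTop
      (𝓝 (∫ x, max (u x - a) 0 * div2 z₁ x)) := by
    refine tendsto_integral_of_dominated_convergence (fun x => ‖u x * div2 z₁ x‖)
      (fun n => (hm n).mul (div2_continuous hz₁.1).aestronglyMeasurable)
      (integrable_mul_div2 hint hz₁).norm (fun n => Eventually.of_forall fun x => ?_)
      (Eventually.of_forall fun x => (sp_tendsto ha (u x)).mul_const _)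
    have := sp_bd a (hp n) (hpos x)
    rw [norm_mul, norm_mul, Real.norm_of_nonneg this.1, Real.norm_of_nonneg (hpos x)]
    exact mul_le_mul_of_nonneg_right this.2 (norm_nonneg _)
  have t2 : Tendsto (fun n : ℕ => ∫ x, (u x - sp a (1 / ((n : ℝ) + 1)) (u x)) * div2 z₂ x) atTop
      (𝓝 (∫ x, min (u x) a * div2 z₂ x)) := by
    refine tendsto_integral_of_dominated_convergence (fun x => ‖u x * div2 z₂ x‖)
      (fun n => (hint.aestronglyMeasurable.sub (hm n)).mul
        (div2_continuous hz₂.1).aestronglyMeasurable)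
      (integrable_mul_div2 hint hz₂).norm (fun n => Eventually.of_forall fun x => ?_)
      (Eventually.of_forall fun x => ?_)
    · have := sp_bd a (hp n) (hpos x)
      rw [norm_mul, norm_mul, Real.norm_of_nonneg (by linarith), Real.norm_of_nonneg (hpos x)]
      exact mul_le_mul_of_nonneg_right (by linarith) (norm_nonneg _)
    · rw [hmin]
      exact (tendsto_const_nhds.sub (sp_tendsto ha (u x))).mul_const _
  refine le_of_tendsto' (t1.add t2) fun n => ?_
  exact split_smooth_phi hint hpos hbv (sp_contDiff a (hp n)) (fun s => (sp_deriv_bd a (hp n) s).1)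
    (fun s => (sp_deriv_bd a (hp n) s).2) (sp_zero _ _) hz₁ hz₂

/-- Total variation of the truncation. -/
def gtv (u : E2 → ℝ) (t : ℝ) : ℝ := TV (fun x => min (u x) (max t 0))

lemma trunc_int {u : E2 → ℝ} (hint : Integrable u) (hpos : ∀ x, 0 ≤ u x) {b : ℝ} (hb : 0 ≤ b) :
    Integrable (fun x => min (u x) b) := by
  refine hint.mono (hint.aestronglyMeasurable.inf aestronglyMeasurable_const)
    (Eventually.of_forall fun x => ?_)
  rw [Real.norm_of_nonneg (le_min (hpos x) hb), Real.norm_of_nonneg (hpos x)]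
  exact min_le_left _ _

lemma trunc_le {u : E2 → ℝ} (hint : Integrable u) (hpos : ∀ x, 0 ≤ u x) (hbv : HasBV u)
    {b : ℝ} (hb : 0 ≤ b) {z : E2 → E2} (hz : Adm z) :
    ∫ x, min (u x) b * div2 z x ≤ TV u := by
  have := split_lemma hint hpos hbv hb adm_zero hz
  simpa [div2_zero] using this

lemma gtv_inc {u : E2 → ℝ} (hint : Integrable u) (hpos : ∀ x, 0 ≤ u x) (hbv : HasBV u)
    {s t : ℝ} (hs : 0 ≤ s) (hst : s ≤ t) {z : E2 → E2} (hz : Adm z) :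
    ∫ x, max (min (u x) t - s) 0 * div2 z x ≤ gtv u t - gtv u s := by
  have ht := hs.trans hst
  have hb : HasBV (fun x => min (u x) t) := hasBV_of fun z hz => trunc_le hint hpos hbv ht hz
  have e : gtv u t = TV (fun x => min (u x) t) := by simp [gtv, max_eq_left ht]
  have : gtv u s ≤ gtv u t - ∫ x, max (min (u x) t - s) 0 * div2 z x := by
    have e2 : gtv u s = TV (fun x => min (u x) s) := by simp [gtv, max_eq_left hs]
    rw [e2]
    refine TV_le fun z₂ hz₂ => ?_
    have := split_lemma (trunc_int hint hpos ht) (fun x => le_min (hpos x) ht) hb hs hz hz₂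
    simp only [min_assoc, min_eq_right hst] at this
    rw [e]
    linarith
  linarith

lemma gtv_mono {u : E2 → ℝ} (hint : Integrable u) (hpos : ∀ x, 0 ≤ u x) (hbv : HasBV u) :
    Monotone (gtv u) := by
  intro s t hst
  have := gtv_inc hint hpos hbv (le_max_right s 0) (max_le_max_right 0 hst) adm_zero
  simp only [div2_zero, mul_zero, integral_zero] at this
  have e : ∀ r, gtv u (max r 0) = gtv u r := fun r => by simp [gtv]
  rw [e, e] at this
  linarith

open scoped Topology in
lemma per_bound {u : E2 → ℝ} (hint : Integrable u) (hpos : ∀ x, 0 ≤ u x) (hbv : HasBV u)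
    {t : ℝ} (ht : 0 < t) (hd : DifferentiableAt ℝ (gtv u) t) {z : E2 → E2} (hz : Adm z) :
    ∫ x, ({x | t < u x} : Set E2).indicator 1 x * div2 z x ≤ deriv (gtv u) t := by
  have hh : Tendsto (fun n : ℕ => 1 / ((n : ℝ) + 1)) atTop (𝓝[≠] 0) := by
    refine tendsto_nhdsWithin_iff.2 ⟨tendsto_one_div_add_atTop_nhds_zero_nat,
      Eventually.of_forall fun n => ?_⟩
    have : 0 < 1 / ((n : ℝ) + 1) := by positivity
    exact this.ne'
  have t1 := (hasDerivAt_iff_tendsto_slope_zero.1 hd.hasDerivAt).comp hh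
  have t2 : Tendsto (fun n : ℕ => ∫ x, ((1 / ((n : ℝ) + 1))⁻¹ *
      max (min (u x) (t + 1 / ((n : ℝ) + 1)) - t) 0) * div2 z x) atTop
      (𝓝 (∫ x, ({x | t < u x} : Set E2).indicator 1 x * div2 z x)) := by
    refine tendsto_integral_of_dominated_convergence (fun x => ‖div2 z x‖) (fun n => ?_)
      ((div2_continuous hz.1).integrable_of_hasCompactSupport (div2_compact hz.2.1)).norm
      (fun n => Eventually.of_forall fun x => ?_)
      (Eventually.of_forall fun x => Tendsto.mul_const _ ?_)
    · have hc : Continuous (fun y : ℝ => (1 / ((n : ℝ) + 1))⁻¹ *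
        max (min y (t + 1 / ((n : ℝ) + 1)) - t) 0) := by fun_prop
      exact (hc.comp_aestronglyMeasurable hint.aestronglyMeasurable).mul
        (div2_continuous hz.1).aestronglyMeasurable
    · have hp : 0 < 1 / ((n : ℝ) + 1) := by positivity
      rw [norm_mul]
      refine mul_le_of_le_one_left (norm_nonneg _) ?_
      rw [Real.norm_of_nonneg (by positivity), inv_mul_le_one₀ hp]
      refine max_le ?_ hp.le
      linarith [min_le_right (u x) (t + 1 / ((n : ℝ) + 1))]
    · by_cases hx : t < u x
      · have e : ({x | t < u x} : Set E2).indicator (1 : E2 → ℝ) x = 1 :=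
          Set.indicator_of_mem (s := {x | t < u x}) hx _
        rw [e]
        refine tendsto_const_nhds.congr' ?_
        have := (tendsto_one_div_add_atTop_nhds_zero_nat (𝕜 := ℝ)).eventually
          (gt_mem_nhds (sub_pos.2 hx))
        filter_upwards [this] with n hn
        have hp : 0 < 1 / ((n : ℝ) + 1) := by positivity
        rw [min_eq_right (by linarith), add_sub_cancel_left, max_eq_left hp.le,
          inv_mul_cancel₀ hp.ne']
      · have e : ({x | t < u x} : Set E2).indicator (1 : E2 → ℝ) x = 0 :=
          Set.indicator_of_notMem (s := {x | t < u x}) hx _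
        rw [e]
        refine tendsto_const_nhds.congr fun n => ?_
        rw [max_eq_right, mul_zero]
        linarith [min_le_left (u x) (t + 1 / ((n : ℝ) + 1)), not_lt.1 hx]
  refine le_of_tendsto_of_tendsto' t2 t1 fun n => ?_
  have hp : 0 < 1 / ((n : ℝ) + 1) := by positivity
  have := gtv_inc hint hpos hbv ht.le (le_add_of_nonneg_right hp.le) hz
  simp only [mul_assoc, Function.comp, smul_eq_mul]
  rw [integral_const_mul]
  exact mul_le_mul_of_nonneg_left this (inv_nonneg.2 hp.le)

lemma TV_congr {u v : E2 → ℝ} (h : u =ᵐ[volume] v) : tvSet u = tvSet v := by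
  have : ∀ z, ∫ x, u x * div2 z x = ∫ x, v x * div2 z x := fun z =>
    integral_congr_ae (h.mono fun x hx => by simp only [hx])
  simp only [tvSet, this]

lemma cheeger_le {D A : Set E2} (hA : NullMeasurableSet A) (hAD : A ⊆ D) (hf : FinPer A)
    (hv : 0 < volR A) : cheegerConst D * volR A ≤ Per A := by
  obtain ⟨B, hBA, hBm, hBe⟩ := hA.exists_measurable_subset_ae_eq
  have e : tvSet (B.indicator 1) = tvSet (A.indicator 1) :=
    TV_congr (indicator_ae_eq_of_ae_eq_set hBe)
  have e1 : Per B = Per A := by unfold Per TV; rw [e]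
  have e2 : FinPer B := by unfold FinPer HasBV; rw [e]; exact hf
  have e3 : volR B = volR A := by unfold volR; rw [measure_congr hBe]
  have : cheegerConst D ≤ Per B / volR B := by
    refine csInf_le ⟨0, ?_⟩ ⟨B, hBm, e2, hBA.trans hAD, by rwa [e3], rfl⟩
    rintro q ⟨C, -, hC, -, hC2, rfl⟩
    exact div_nonneg (TV_nonneg hC) hC2.le
  rw [e1, e3] at this
  exact (le_div_iff₀ hv).1 this

lemma deriv_int {g : ℝ → ℝ} (hg : Monotone g) {M : ℝ} (h0 : 0 ≤ g 0) (hM : ∀ t, g t ≤ M) :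
    IntegrableOn (deriv g) (Ioi 0) ∧ ∫ t in Ioi 0, deriv g t ≤ M := by
  have hd : ∀ t, 0 ≤ deriv g t := fun t => hg.deriv_nonneg
  have hn : ∀ n : ℕ, (0 : ℝ) ≤ n := fun n => n.cast_nonneg
  have hI : ∀ n : ℕ, ∫ t in (0 : ℝ)..n, deriv g t ≤ M := fun n => by
    have := (hg.monotoneOn (uIcc 0 (n : ℝ))).intervalIntegral_deriv_mem_uIcc
    rw [uIcc_of_le (sub_nonneg.2 (hg (hn n)))] at this
    linarith [this.2, hM n]
  have hint : IntegrableOn (deriv g) (Ioi 0) := by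
    refine integrableOn_Ioi_of_intervalIntegral_norm_bounded (b := fun n : ℕ => (n : ℝ))
      (l := atTop) M 0 (fun n => ?_) tendsto_natCast_atTop_atTop (Eventually.of_forall fun n => ?_)
    · exact ((hg.monotoneOn _).intervalIntegrable_deriv (a := 0) (b := (n : ℝ))).1
    · simp_rw [Real.norm_of_nonneg (hd _)]
      exact hI n
  exact ⟨hint, le_of_tendsto' (intervalIntegral_tendsto_integral_Ioi 0 hint
    tendsto_natCast_atTop_atTop) hI⟩

/-- equality in the Cheeger inequality forces a.e. level sets to be Cheeger sets. -/
theorem stmt7 (D : Set E2) (hDo : IsOpen D) (hDb : Bornology.IsBounded D)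
    (E₀ : Set E2) (hE₀ : IsCheegerSet D E₀)
    (u : E2 → ℝ) (hpos : ∀ x, 0 ≤ u x) (hzero : ∀ x ∉ D, u x = 0)
    (hint : Integrable u volume) (hbv : HasBV u)
    (heq : TV u = cheegerConst D * ∫ x, u x) :
    ∀ᵐ t : ℝ ∂volume, 0 < t →
      (0 < volR {x | t < u x} →
        Per {x | t < u x} = cheegerConst D * volR {x | t < u x}) := by
  have hv0 : ∀ A : Set E2, 0 ≤ volR A := fun A => ENNReal.toReal_nonneg
  have hmono := gtv_mono hint hpos hbv
  have hg0 : 0 ≤ gtv u 0 :=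
    TV_nonneg (hasBV_of fun z hz => trunc_le hint hpos hbv (le_max_right 0 0) hz)
  have hgM : ∀ t, gtv u t ≤ TV u := fun t =>
    TV_le fun z hz => trunc_le hint hpos hbv (le_max_right t 0) hz
  obtain ⟨hdi, hdM⟩ := deriv_int hmono hg0 hgM
  have hsub : ∀ t : ℝ, 0 < t → ({x | t < u x} : Set E2) ⊆ D := by
    intro t ht x hx
    by_contra h
    have := hzero x h
    have hx : t < u x := hx
    linarith
  have hnull : ∀ t : ℝ, NullMeasurableSet ({x | t < u x} : Set E2) := fun t =>
    nullMeasurableSet_lt aemeasurable_const hint.aemeasurable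
  have hP : ∀ t : ℝ, 0 < t → DifferentiableAt ℝ (gtv u) t →
      FinPer {x | t < u x} ∧ Per {x | t < u x} ≤ deriv (gtv u) t := fun t ht hd =>
    ⟨hasBV_of fun z hz => per_bound hint hpos hbv ht hd hz,
      TV_le fun z hz => per_bound hint hpos hbv ht hd hz⟩
  have hle : ∀ t : ℝ, 0 < t → DifferentiableAt ℝ (gtv u) t →
      cheegerConst D * volR {x | t < u x} ≤ deriv (gtv u) t := by
    intro t ht hd
    rcases (hv0 {x | t < u x}).eq_or_lt with h | h
    · rw [← h, mul_zero]
      exact hmono.deriv_nonneg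
    · exact (cheeger_le (hnull t) (hsub t ht) (hP t ht hd).1 h).trans (hP t ht hd).2
  have hlc : ∫ x, u x = ∫ t in Ioi 0, volR {x | t < u x} :=
    hint.integral_eq_integral_meas_lt (Eventually.of_forall hpos)
  have hlam : 0 ≤ cheegerConst D := by
    rw [← hE₀.2.2.2.2]
    exact div_nonneg (TV_nonneg hE₀.2.1) hE₀.2.2.2.1.le
  have haed : ∀ᵐ t : ℝ ∂(volume.restrict (Ioi 0)), DifferentiableAt ℝ (gtv u) t :=
    ae_restrict_of_ae hmono.ae_differentiableAt
  have hle' : ∀ᵐ t : ℝ ∂(volume.restrict (Ioi 0)),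
      cheegerConst D * volR {x | t < u x} ≤ deriv (gtv u) t := by
    filter_upwards [haed, ae_restrict_mem measurableSet_Ioi] with t h1 h2
    exact hle t h2 h1
  have hanti : AntitoneOn (fun t : ℝ => volR {x | t < u x}) (Ioi 0) := by
    intro s hs t _ hst
    refine ENNReal.toReal_mono (Integrable.measure_gt_lt_top hint hs).ne (measure_mono ?_)
    intro x hx
    exact lt_of_le_of_lt hst hx
  have hmi : Integrable (fun t : ℝ => cheegerConst D * volR {x | t < u x})
      (volume.restrict (Ioi 0)) := by
    refine Integrable.mono' hdi
      ((aemeasurable_restrict_of_antitoneOn measurableSet_Ioi hanti).const_mul _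
        ).aestronglyMeasurable ?_
    filter_upwards [hle'] with t h
    rwa [Real.norm_of_nonneg (mul_nonneg hlam (hv0 _))]
  have hz : ∀ᵐ t : ℝ ∂(volume.restrict (Ioi 0)),
      deriv (gtv u) t - cheegerConst D * volR {x | t < u x} = 0 := by
    have hnn : 0 ≤ᵐ[volume.restrict (Ioi 0)]
        (fun t : ℝ => deriv (gtv u) t - cheegerConst D * volR {x | t < u x}) := by
      filter_upwards [hle'] with t h
      exact sub_nonneg.2 h
    refine (integral_eq_zero_iff_of_nonneg_ae hnn (hdi.sub hmi)).1 ?_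
    refine le_antisymm ?_ (integral_nonneg_of_ae hnn)
    rw [integral_sub hdi hmi, integral_const_mul, ← hlc, ← heq]
    linarith
  rw [ae_restrict_iff' measurableSet_Ioi] at hz
  filter_upwards [hz, hmono.ae_differentiableAt] with t h1 h2 ht hv
  have h3 := h1 ht
  have h4 := cheeger_le (hnull t) (hsub t ht) (hP t ht h2).1 hv
  have h5 := (hP t ht h2).2
  linarith

end
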